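/- arXiv:2503.21715 — 2 statements merged into one kernel-verified Lean document; each statement's English description precedes it below -/
import Mathlib

section
/- For every positive integer n, the smooth approximation q̃(n) = (n/16)^{1/3} satisfies |q̃(n) - q*(n)| < 1, where q*(n) is the minimizer over positive integers q of MSE_n(q) = ⌊(n-1)/(q+1)⌋^{-1} · v(q) + (2/5 + 1/(10q) - v_n)^2, with v(1) = 7/20, v(2) = 1353/2800, v(q) = 8/25 + 88/(175q) - 229/(700q^2) for q ≥ 3, and v_n = n(n-2)(4n-7) / (10(n-1)^2(n+1)). -/
open Real

/-- The variance term `v(q)` of the bootstrap variance `V_j^B` (Lemma on `Var(V_j^B)`). -/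
noncomputable def blockVar (q : ℕ) : ℝ :=
  if q = 1 then 7 / 20
  else if q = 2 then 1353 / 2800
  else 8 / 25 + 88 / (175 * q) - 229 / (700 * (q : ℝ) ^ 2)

/-- The exact finite-sample variance `v_n` of `√n` times Chatterjee's rank correlation
under the null. -/
noncomputable def vSeq (n : ℕ) : ℝ :=
  (n : ℝ) * ((n : ℝ) - 2) * (4 * (n : ℝ) - 7) / (10 * ((n : ℝ) - 1) ^ 2 * ((n : ℝ) + 1))

/-- The mean squared error `MSE_n(q)` of the bootstrap variance. -/
noncomputable def MSE (n q : ℕ) : ℝ :=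
  (((n - 1) / (q + 1) : ℕ) : ℝ)⁻¹ * blockVar q
    + (2 / 5 + 1 / (10 * (q : ℝ)) - vSeq n) ^ 2

lemma blockVar_of_three_le {q : ℕ} (hq : 3 ≤ q) :
    blockVar q = 8 / 25 + 88 / (175 * q) - 229 / (700 * (q : ℝ) ^ 2) := by
  unfold blockVar
  rw [if_neg (by omega), if_neg (by omega)]

lemma blockVar_pos {q : ℕ} (hq : 1 ≤ q) : 0 < blockVar q := by
  rcases Nat.lt_or_ge q 3 with h | h
  · unfold blockVar
    interval_cases q <;> norm_num
  · rw [blockVar_of_three_le h]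
    have hq' : (3 : ℝ) ≤ q := by exact_mod_cast h
    have : 8 / 25 + 88 / (175 * (q : ℝ)) - 229 / (700 * (q : ℝ) ^ 2)
        = (224 * (q : ℝ) ^ 2 + 352 * q - 229) / (700 * (q : ℝ) ^ 2) := by
      field_simp
      ring
    rw [this]
    apply div_pos <;> nlinarith

/-- The gap between the asymptotic and the exact variance, scaled by `n - 1`. -/
lemma exists_vSeq_eq {n : ℕ} (hn : 3 ≤ n) :
    ∃ β : ℝ, 0 ≤ β ∧ β ≤ 11 / 10 ∧ 2 / 5 - vSeq n = β / ((n : ℝ) - 1) := by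
  have hn' : (3 : ℝ) ≤ n := by exact_mod_cast hn
  have h1 : (0 : ℝ) < (n : ℝ) - 1 := by linarith
  have h2 : (0 : ℝ) < (n : ℝ) + 1 := by linarith
  refine ⟨(11 * (n : ℝ) ^ 2 - 18 * n + 4) / (10 * ((n : ℝ) - 1) * ((n : ℝ) + 1)), ?_, ?_, ?_⟩
  · apply div_nonneg
    · nlinarith
    · positivity
  · rw [div_le_iff₀ (by positivity)]
    nlinarith
  · unfold vSeq
    field_simp
    ring

lemma div_blocks_bounds {n q : ℕ} (hn : 3 ≤ n) (hq : 1 ≤ q) (hqn : q ≤ (n - 1) / 2) :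
    0 < (((n - 1) / (q + 1) : ℕ) : ℝ) ∧
    (((n - 1) / (q + 1) : ℕ) : ℝ) * ((q : ℝ) + 1) ≤ (n : ℝ) - 1 ∧
    (n : ℝ) - 1 - q ≤ (((n - 1) / (q + 1) : ℕ) : ℝ) * ((q : ℝ) + 1) := by
  have hm : 0 < (n - 1) / (q + 1) := Nat.div_pos (by omega) (by omega)
  have e := Nat.div_add_mod (n - 1) (q + 1)
  have l := Nat.mod_lt (n - 1) (Nat.succ_pos q)
  generalize (n - 1) / (q + 1) = m at *
  have l1 : m * (q + 1) + 1 ≤ n := by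
    have : (q + 1) * m = m * (q + 1) := mul_comm _ _
    omega
  have l2 : n ≤ m * (q + 1) + 1 + q := by
    have : (q + 1) * m = m * (q + 1) := mul_comm _ _
    simp only [Nat.succ_eq_add_one] at l
    omega
  have l1' : (m : ℝ) * ((q : ℝ) + 1) + 1 ≤ n := by exact_mod_cast l1
  have l2' : (n : ℝ) ≤ (m : ℝ) * ((q : ℝ) + 1) + 1 + q := by exact_mod_cast l2
  refine ⟨by exact_mod_cast hm, by linarith, by linarith⟩

/-- Removing the floor from a comparison of two mean squared errors. -/
lemma smooth_of_MSE_le {n q p : ℕ} (hn : 3 ≤ n) (hq : 1 ≤ q) (hqn : q ≤ (n - 1) / 2)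
    (hp : 1 ≤ p) (hpn : p ≤ (n - 1) / 2) (h : MSE n q ≤ MSE n p) :
    ∃ β : ℝ, 0 ≤ β ∧ β ≤ 11 / 10 ∧
      ((q : ℝ) + 1) * blockVar q - ((p : ℝ) + 1) * blockVar p ≤
        ((p : ℝ) + 1) * blockVar p * p / ((n : ℝ) - 1 - p)
        + ((n : ℝ) - 1) / 100 * (1 / (p : ℝ) ^ 2 - 1 / (q : ℝ) ^ 2)
        + β / 5 * (1 / (p : ℝ) - 1 / q) := by
  obtain ⟨β, hβ0, hβ1, hβ⟩ := exists_vSeq_eq hn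
  refine ⟨β, hβ0, hβ1, ?_⟩
  obtain ⟨mq, mq1, -⟩ := div_blocks_bounds hn hq hqn
  obtain ⟨mp, -, mp2⟩ := div_blocks_bounds hn hp hpn
  unfold MSE at h
  have hvq := blockVar_pos hq
  have hvp := blockVar_pos hp
  have hq0 : (0 : ℝ) < q := by exact_mod_cast hq
  have hp0 : (0 : ℝ) < p := by exact_mod_cast hp
  have hN : (0 : ℝ) < (n : ℝ) - 1 := by
    have : (3 : ℝ) ≤ n := by exact_mod_cast hn
    linarith
  have hNp : (0 : ℝ) < (n : ℝ) - 1 - p := by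
    have : p + 1 < n := by omega
    have : (p : ℝ) + 1 < n := by exact_mod_cast this
    linarith
  generalize (((n - 1) / (q + 1) : ℕ) : ℝ) = a at *
  generalize (((n - 1) / (p + 1) : ℕ) : ℝ) = b at *
  generalize blockVar q = x at *
  generalize blockVar p = y at *
  have e1 : 2 / 5 + 1 / (10 * (q : ℝ)) - vSeq n = 1 / (10 * (q : ℝ)) + β / ((n : ℝ) - 1) := by
    linarith
  have e2 : 2 / 5 + 1 / (10 * (p : ℝ)) - vSeq n = 1 / (10 * (p : ℝ)) + β / ((n : ℝ) - 1) := by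
    linarith
  rw [e1, e2] at h
  generalize (n : ℝ) - 1 = N at *
  have lo : ((q : ℝ) + 1) * x / N ≤ a⁻¹ * x := by
    rw [inv_mul_eq_div, div_le_div_iff₀ hN mq]
    nlinarith
  have hi : b⁻¹ * y ≤ ((p : ℝ) + 1) * y / (N - p) := by
    rw [inv_mul_eq_div, div_le_div_iff₀ mp hNp]
    nlinarith
  have h' : ((q : ℝ) + 1) * x / N + (1 / (10 * (q : ℝ)) + β / N) ^ 2 ≤
      ((p : ℝ) + 1) * y / (N - p) + (1 / (10 * (p : ℝ)) + β / N) ^ 2 := by linarith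
  have h'' := mul_le_mul_of_nonneg_left h' hN.le
  have e3 : N * (((q : ℝ) + 1) * x / N + (1 / (10 * (q : ℝ)) + β / N) ^ 2) =
      ((q : ℝ) + 1) * x + N / 100 * (1 / (q : ℝ) ^ 2) + β / 5 * (1 / q) + β ^ 2 / N := by
    field_simp
    ring
  have e4 : N * (((p : ℝ) + 1) * y / (N - p) + (1 / (10 * (p : ℝ)) + β / N) ^ 2) =
      ((p : ℝ) + 1) * y + ((p : ℝ) + 1) * y * p / (N - p)
        + N / 100 * (1 / (p : ℝ) ^ 2) + β / 5 * (1 / p) + β ^ 2 / N := by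
    field_simp
    ring
  rw [e3, e4] at h''
  linarith

lemma add_one_mul_blockVar {q : ℕ} (hq : 3 ≤ q) :
    ((q : ℝ) + 1) * blockVar q =
      8 / 25 * q + 144 / 175 + 123 / 700 / q - 229 / 700 / (q : ℝ) ^ 2 := by
  have : (0 : ℝ) < q := by exact_mod_cast (by omega : 0 < q)
  rw [blockVar_of_three_le hq]
  field_simp
  ring

lemma add_one_mul_blockVar_le {q : ℕ} (hq : 3 ≤ q) :
    ((q : ℝ) + 1) * blockVar q ≤ 31 / 50 * q := by
  have h3 : (3 : ℝ) ≤ q := by exact_mod_cast hq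
  rw [add_one_mul_blockVar hq]
  have h1 : 123 / 700 / (q : ℝ) ≤ 123 / 700 / 3 := by gcongr
  have h2 : 0 ≤ 229 / 700 / (q : ℝ) ^ 2 := by positivity
  linarith

lemma add_one_mul_blockVar_sub {q p : ℕ} (hq : 3 ≤ q) (hp : 3 ≤ p) :
    ((q : ℝ) + 1) * blockVar q - ((p : ℝ) + 1) * blockVar p =
      ((q : ℝ) - p) * (8 / 25 - 123 / 700 / (p * q)
        + 229 / 700 * (p + q) / ((p : ℝ) ^ 2 * (q : ℝ) ^ 2)) := by
  have : (0 : ℝ) < q := by exact_mod_cast (by omega : 0 < q)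
  have : (0 : ℝ) < p := by exact_mod_cast (by omega : 0 < p)
  rw [add_one_mul_blockVar hq, add_one_mul_blockVar hp]
  field_simp
  ring

lemma blockVar_one : blockVar 1 = 7 / 20 := by norm_num [blockVar]

lemma blockVar_two : blockVar 2 = 1353 / 2800 := by norm_num [blockVar]

lemma MSE_one_lt {n q : ℕ} (hn : n ≤ 16) (hq : 2 ≤ q) (hqn : q ≤ (n - 1) / 2) :
    MSE n 1 < MSE n q := by
  have h7 : q ≤ 7 := by omega
  have h5 : 5 ≤ n := by omega
  interval_cases q <;> interval_cases n <;>
    first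
    | (exfalso; omega)
    | norm_num [MSE, blockVar, vSeq]

lemma MSE_two_lt {n q : ℕ} (hn : 17 ≤ n) (hn' : n ≤ 128) (hq : 3 ≤ q) (hqn : q ≤ (n - 1) / 2) :
    MSE n 2 < MSE n q := by
  by_contra! h
  obtain ⟨β, h0, h1, h⟩ := smooth_of_MSE_le (by omega) (by omega) hqn (by omega) (by omega) h
  rw [add_one_mul_blockVar hq, blockVar_two] at h
  have hN : (17 : ℝ) ≤ n := by exact_mod_cast hn
  have hN' : (n : ℝ) ≤ 128 := by exact_mod_cast hn'
  have hl : ((2 : ℕ) + 1 : ℝ) * (1353 / 2800) * (2 : ℕ) / ((n : ℝ) - 1 - (2 : ℕ))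
      ≤ 211 / 1000 - ((n : ℝ) - 17) / 600 := by
    push_cast
    rw [div_le_iff₀ (by linarith)]
    nlinarith
  rcases Nat.lt_or_ge q 4 with h4 | h4
  · obtain rfl : q = 3 := by omega
    push_cast at h hl
    linarith
  · have hq' : (4 : ℝ) ≤ q := by exact_mod_cast h4
    have hq0 : (0 : ℝ) < q := by linarith
    have a1 : 229 / 700 / (q : ℝ) ^ 2 ≤ 229 / 700 / 4 ^ 2 := by gcongr
    have a2 : 0 ≤ 123 / 700 / (q : ℝ) := by positivity
    have a3 : ((n : ℝ) - 1) / 100 * (1 / ((2 : ℕ) : ℝ) ^ 2 - 1 / (q : ℝ) ^ 2)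
        ≤ ((n : ℝ) - 1) / 100 * (1 / 4) := by
      apply mul_le_mul_of_nonneg_left _ (by linarith)
      have : 0 ≤ 1 / (q : ℝ) ^ 2 := by positivity
      push_cast
      linarith
    have a4 : β / 5 * (1 / ((2 : ℕ) : ℝ) - 1 / q) ≤ 11 / 50 * (1 / 2) := by
      have : 0 ≤ 1 / (q : ℝ) := by positivity
      have : 0 ≤ β / 5 * (1 / (q : ℝ)) := by positivity
      push_cast
      linarith
    push_cast at h hl a3 a4
    linarith

lemma MSE_lt_of_le_cube {n p q : ℕ} (hp : 3 ≤ p) (hpn : 16 * ((p : ℝ) - 1) ^ 3 < n)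
    (hnp : (n : ℝ) ≤ 16 * (p : ℝ) ^ 3) (hpq : p < q) (hqn : q ≤ (n - 1) / 2) :
    MSE n p < MSE n q := by
  by_contra! h
  obtain ⟨β, h0, h1, h⟩ := smooth_of_MSE_le (by omega) (by omega) hqn (by omega) (by omega) h
  rw [add_one_mul_blockVar_sub (by omega) hp] at h
  have hgp := add_one_mul_blockVar_le hp
  have hp3 : (3 : ℝ) ≤ p := by exact_mod_cast hp
  have hpq' : (p : ℝ) + 1 ≤ q := by exact_mod_cast hpq
  have hn1 : 16 * ((p : ℝ) - 1) ^ 3 ≤ (n : ℝ) - 1 := by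
    have : 16 * ((p : ℤ) - 1) ^ 3 < n := by exact_mod_cast hpn
    have : 16 * ((p : ℤ) - 1) ^ 3 ≤ n - 1 := by omega
    exact_mod_cast this
  generalize ((p : ℝ) + 1) * blockVar p = g at *
  generalize (p : ℝ) = P at *
  generalize (q : ℝ) = Q at *
  have hP0 : 0 < P := by linarith
  have hQ0 : 0 < Q := by linarith
  have hden : 9 / 2 * P ^ 3 ≤ (n : ℝ) - 1 - P := by
    obtain ⟨j, rfl⟩ : ∃ j, P = 3 + j := ⟨P - 3, by ring⟩
    have hj : 0 ≤ j := by linarith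
    nlinarith [pow_nonneg hj 3, pow_nonneg hj 2]
  have hloss : g * P / ((n : ℝ) - 1 - P) ≤ 7 / 50 / P := by
    rw [div_le_div_iff₀ (lt_of_lt_of_le (by positivity) hden) hP0]
    nlinarith [mul_le_mul_of_nonneg_right hgp (sq_nonneg P)]
  have hbias : ((n : ℝ) - 1) / 100 * (1 / P ^ 2 - 1 / Q ^ 2) ≤
      (Q - P) * (4 / 25 * P * (P + Q) / Q ^ 2) := by
    have e : (Q - P) * (4 / 25 * P * (P + Q) / Q ^ 2)
        = 16 * P ^ 3 / 100 * (1 / P ^ 2 - 1 / Q ^ 2) := by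
      field_simp
      ring
    rw [e]
    apply mul_le_mul_of_nonneg_right (by linarith)
    have : 1 / Q ^ 2 ≤ 1 / P ^ 2 := by gcongr; linarith
    linarith
  have hcross : β / 5 * (1 / P - 1 / Q) ≤ (Q - P) * (11 / 50 / (P * Q)) := by
    have e : (Q - P) * (11 / 50 / (P * Q)) = 11 / 50 * (1 / P - 1 / Q) := by
      field_simp
    rw [e]
    apply mul_le_mul_of_nonneg_right (by linarith)
    have : 1 / Q ≤ 1 / P := by gcongr; linarith
    linarith
  have hcurv : 0 ≤ (Q - P) * (229 / 700 * (P + Q) / (P ^ 2 * Q ^ 2)) := by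
    apply mul_nonneg (by linarith)
    positivity
  have hmain : 7 / 50 / P < 8 / 25 - 123 / 700 / (P * Q) - 4 / 25 * P * (P + Q) / Q ^ 2
      - 11 / 50 / (P * Q) := by
    rw [← sub_pos]
    have e : 8 / 25 - 123 / 700 / (P * Q) - 4 / 25 * P * (P + Q) / Q ^ 2
        - 11 / 50 / (P * Q) - 7 / 50 / P =
        (8 / 25 * Q ^ 2 * P - 277 / 700 * Q - 4 / 25 * P ^ 2 * (P + Q) - 7 / 50 * Q ^ 2)
          / (P * Q ^ 2) := by
      field_simp
      ring
    rw [e]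
    apply div_pos _ (by positivity)
    obtain ⟨k, rfl⟩ : ∃ k, Q = P + 1 + k := ⟨Q - P - 1, by ring⟩
    have hk : 0 ≤ k := by linarith
    obtain ⟨j, rfl⟩ : ∃ j, P = 3 + j := ⟨P - 3, by ring⟩
    have hj : 0 ≤ j := by linarith
    ring_nf
    positivity
  have hpos : 0 ≤ 7 / 50 / P := by positivity
  nlinarith

lemma MSE_succ_lt_of_cube_le {n q : ℕ} (hq : 1 ≤ q) (hn : 16 * ((q : ℝ) + 1) ^ 3 ≤ n) :
    MSE n (q + 1) < MSE n q := by
  by_contra! h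
  have hnat : 16 * (q + 1) ^ 3 ≤ n := by exact_mod_cast hn
  have hsz : 16 * (q + 1) ≤ n :=
    (Nat.mul_le_mul_left _ (Nat.le_self_pow (by norm_num) _)).trans hnat
  obtain ⟨β, h0, h1, h⟩ := smooth_of_MSE_le (by omega) hq (by omega)
    (show 1 ≤ q + 1 by omega) (by omega) h
  rcases Nat.lt_or_ge q 3 with h3 | h3
  · interval_cases q
    · have hn128 : (128 : ℝ) ≤ n := by exact_mod_cast hnat
      norm_num [blockVar_one, blockVar_two] at h
      have hl : (4059 / 1400) / ((n : ℝ) - 1 - 2) ≤ 1 / 40 := by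
        rw [div_le_iff₀ (by linarith)]
        linarith
      linarith
    · have e := add_one_mul_blockVar (q := 3) le_rfl
      have hn432 : (432 : ℝ) ≤ n := by exact_mod_cast hnat
      norm_num at h e
      rw [e, blockVar_two] at h
      norm_num at h
      have hl : (2843 / 525) / ((n : ℝ) - 1 - 3) ≤ 1 / 60 := by
        rw [div_le_iff₀ (by linarith)]
        linarith
      linarith
  · rw [add_one_mul_blockVar_sub h3 (by omega)] at h
    have hgp := add_one_mul_blockVar_le (show 3 ≤ q + 1 by omega)
    have hQ3 : (3 : ℝ) ≤ q := by exact_mod_cast h3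
    generalize (((q + 1 : ℕ) : ℝ) + 1) * blockVar (q + 1) = g at *
    push_cast at h hgp
    generalize (q : ℝ) = Q at *
    obtain ⟨P, hP⟩ : ∃ P, P = Q + 1 := ⟨_, rfl⟩
    rw [← hP] at h hgp hn
    have hP0 : 0 < P := by linarith
    have hQ0 : 0 < Q := by linarith
    have hden : 31 / 2 * P ^ 3 ≤ (n : ℝ) - 1 - P := by
      nlinarith [mul_nonneg hP0.le (sq_nonneg (P - 4)), mul_nonneg hP0.le hP0.le]
    have hloss : g * P / ((n : ℝ) - 1 - P) ≤ 1 / 25 / P := by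
      rw [div_le_div_iff₀ (lt_of_lt_of_le (by positivity) hden) hP0]
      nlinarith [mul_le_mul_of_nonneg_right hgp (sq_nonneg P)]
    have hinv : 1 / P ≤ 1 / Q := by gcongr; linarith
    have hinv2 : 1 / P ^ 2 ≤ 1 / Q ^ 2 := by gcongr; linarith
    have hcross : β / 5 * (1 / P - 1 / Q) ≤ 0 :=
      mul_nonpos_of_nonneg_of_nonpos (by positivity) (by linarith)
    have hbias : ((n : ℝ) - 1) / 100 * (1 / P ^ 2 - 1 / Q ^ 2) ≤
        (16 * P ^ 3 - 1) / 100 * (1 / P ^ 2 - 1 / Q ^ 2) :=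
      mul_le_mul_of_nonpos_right (by linarith) (by linarith)
    have hmain : 0 < (Q - P) * (8 / 25 - 123 / 700 / (P * Q)
        + 229 / 700 * (P + Q) / (P ^ 2 * Q ^ 2)) - 1 / 25 / P
        - (16 * P ^ 3 - 1) / 100 * (1 / P ^ 2 - 1 / Q ^ 2) := by
      have e : (Q - P) * (8 / 25 - 123 / 700 / (P * Q)
          + 229 / 700 * (P + Q) / (P ^ 2 * Q ^ 2)) - 1 / 25 / P
          - (16 * P ^ 3 - 1) / 100 * (1 / P ^ 2 - 1 / Q ^ 2)
          = ((Q - P) * (8 / 25 * P ^ 2 * Q ^ 2 - 123 / 700 * P * Q + 229 / 700 * (P + Q))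
            - 1 / 25 * P * Q ^ 2 - (16 * P ^ 3 - 1) / 100 * (Q ^ 2 - P ^ 2))
            / (P ^ 2 * Q ^ 2) := by
        field_simp
      rw [e]
      apply div_pos _ (by positivity)
      subst hP
      obtain ⟨j, rfl⟩ : ∃ j, Q = 3 + j := ⟨Q - 3, by ring⟩
      have hj : 0 ≤ j := by linarith
      ring_nf
      positivity
    linarith

/-- The smooth approximation `q̃(n) = (n/16)^(1/3)` is within distance one of
any minimizer `q*(n)` of `MSE_n(q)` over `1 ≤ q ≤ ⌊(n-1)/2⌋`. -/
theorem approx_optimal_q (n : ℕ) (hn : 3 ≤ n)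
    (qstar : ℕ) (hq1 : 1 ≤ qstar) (hq2 : qstar ≤ (n - 1) / 2)
    (hmin : ∀ q : ℕ, 1 ≤ q → q ≤ (n - 1) / 2 → MSE n qstar ≤ MSE n q) :
    |((n : ℝ) / 16) ^ ((1 : ℝ) / 3) - (qstar : ℝ)| < 1 := by
  have hn0 : (0 : ℝ) ≤ (n : ℝ) / 16 := by positivity
  have hcube : (((n : ℝ) / 16) ^ ((1 : ℝ) / 3)) ^ 3 = (n : ℝ) / 16 := by
    rw [← rpow_natCast, ← rpow_mul hn0]
    norm_num
  have hx0 : 0 < ((n : ℝ) / 16) ^ ((1 : ℝ) / 3) := by positivity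
  generalize ((n : ℝ) / 16) ^ ((1 : ℝ) / 3) = x at *
  rw [abs_lt]
  constructor
  · by_contra! hc
    have hp1 : 0 < ⌈x⌉₊ := Nat.ceil_pos.mpr hx0
    have hle := Nat.le_ceil x
    have hlt := Nat.ceil_lt_add_one hx0.le
    have hpq : ⌈x⌉₊ < qstar := by
      have : (⌈x⌉₊ : ℝ) < qstar := by linarith
      exact_mod_cast this
    generalize ⌈x⌉₊ = p at *
    have hp1' : (1 : ℝ) ≤ p := by exact_mod_cast hp1
    have hnp : (n : ℝ) ≤ 16 * (p : ℝ) ^ 3 := by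
      have := pow_le_pow_left₀ hx0.le hle 3
      linarith
    have hpn : 16 * ((p : ℝ) - 1) ^ 3 < n := by
      have := pow_lt_pow_left₀ (show (p : ℝ) - 1 < x by linarith) (by linarith)
        (show 3 ≠ 0 by norm_num)
      linarith
    refine absurd (hmin p hp1 (by omega)) (not_le.mpr ?_)
    rcases Nat.lt_or_ge p 3 with h3 | h3
    · interval_cases p
      · norm_num at hnp
        exact MSE_one_lt (by exact_mod_cast hnp) hpq hq2
      · norm_num at hnp hpn
        exact MSE_two_lt (by exact_mod_cast hpn) (by exact_mod_cast hnp) hpq hq2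
    · exact MSE_lt_of_le_cube h3 hpn hnp hpq hq2
  · by_contra! hc
    have hn16 : 16 * ((qstar : ℝ) + 1) ^ 3 ≤ n := by
      have := pow_le_pow_left₀ (by positivity) (show (qstar : ℝ) + 1 ≤ x by linarith) 3
      linarith
    have hnat : 16 * (qstar + 1) ^ 3 ≤ n := by exact_mod_cast hn16
    have hsz : qstar + 1 ≤ (n - 1) / 2 := by
      have : 16 * (qstar + 1) ≤ 16 * (qstar + 1) ^ 3 :=
        Nat.mul_le_mul_left _ (Nat.le_self_pow (by norm_num) _)
      omega
    exact absurd (hmin (qstar + 1) (by omega) hsz)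
      (not_le.mpr (MSE_succ_lt_of_cube_le hq1 hn16))
end

section
/- (Modified Borell inequality) Let X_1, ..., X_p be jointly Gaussian mean-zero real random variables with σ² = max_i Var(X_i) finite and nonzero. Then for any λ > 0, P(max_i X_i > E[max_i X_i] + λ) ≤ exp(-λ²/(2σ²)). -/
open MeasureTheory ProbabilityTheory

section GaussianStability

variable {E : Type*} [NormedAddCommGroup E] [NormedSpace ℝ E] [MeasurableSpace E] [BorelSpace E]

theorem isGaussian_map_smul (μ : Measure E) [IsGaussian μ] (s : ℝ) :
    IsGaussian (μ.map (s • ·)) :=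
  isGaussian_map (s • ContinuousLinearMap.id ℝ E)

theorem charFunDual_map_smul_of_centered (μ : Measure E) [IsGaussian μ]
    (hμ : ∀ L : StrongDual ℝ E, ∫ x, L x ∂μ = 0) (s : ℝ) (L : StrongDual ℝ E) :
    charFunDual (μ.map (s • ·)) L = Complex.exp (((-(s ^ 2 * Var[L; μ]) / 2 : ℝ) : ℂ)) := by
  have h := charFunDual_map (μ := μ) (s • ContinuousLinearMap.id ℝ E) L
  have h2 : L.comp (s • ContinuousLinearMap.id ℝ E) = s • L := by ext; simp
  rw [h2, IsGaussian.charFunDual_eq_of_forall_strongDual_eq_zero hμ] at h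
  refine h.trans ?_
  have h3 : Var[(s • L : StrongDual ℝ E); μ] = s ^ 2 * Var[L; μ] := by
    rw [FunLike.coe_smul, variance_smul]
  rw [h3]
  push_cast
  ring_nf

variable [SecondCountableTopology E] [CompleteSpace E]

theorem map_smul_conv_map_smul_of_centered (μ : Measure E) [IsGaussian μ]
    (hμ : ∀ L : StrongDual ℝ E, ∫ x, L x ∂μ = 0) {a b c : ℝ} (h : a ^ 2 + b ^ 2 = c ^ 2) :
    (μ.map (a • ·)) ∗ (μ.map (b • ·)) = μ.map (c • ·) := by
  have := isGaussian_map_smul μ a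
  have := isGaussian_map_smul μ b
  have := isGaussian_map_smul μ c
  refine Measure.ext_of_charFunDual ?_
  ext L
  rw [charFunDual_conv]
  simp only [charFunDual_map_smul_of_centered μ hμ]
  rw [← Complex.exp_add, ← h]
  push_cast
  ring_nf

theorem integrable_exp_mul_norm_of_isGaussian (μ : Measure E) [IsGaussian μ] (c : ℝ) :
    Integrable (fun x ↦ Real.exp (c * ‖x‖)) μ := by
  obtain ⟨C, hC, hint⟩ := IsGaussian.exists_integrable_exp_sq μ
  refine (hint.const_mul (Real.exp (c ^ 2 / (4 * C)))).mono' (by fun_prop) (ae_of_all _ fun x ↦ ?_)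
  rw [Real.norm_eq_abs, Real.abs_exp, ← Real.exp_add, Real.exp_le_exp]
  have : c ^ 2 / (4 * C) + C * ‖x‖ ^ 2 - c * ‖x‖ = C * (‖x‖ - c / (2 * C)) ^ 2 := by
    field_simp; ring
  nlinarith [mul_nonneg hC.le (sq_nonneg (‖x‖ - c / (2 * C)))]

end GaussianStability

theorem abs_integral_le_of_forall_abs_le {α : Type*} [MeasurableSpace α] {M : Measure α}
    [IsProbabilityMeasure M] {f : α → ℝ} {c : ℝ} (h : ∀ x, |f x| ≤ c) : |∫ x, f x ∂M| ≤ c := by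
  simpa using norm_integral_le_of_norm_le_const (f := f) (ae_of_all M h)

section SoftMaximum

variable {ι : Type*} [Fintype ι]

theorem abs_sum_mul_le_norm {w : ι → ℝ} (h0 : ∀ i, 0 ≤ w i) (h1 : ∑ i, w i = 1) (d : ι → ℝ) :
    |∑ i, w i * d i| ≤ ‖d‖ := by
  calc |∑ i, w i * d i| ≤ ∑ i, |w i * d i| := Finset.abs_sum_le_sum_abs _ _
    _ ≤ ∑ i, w i * ‖d‖ := Finset.sum_le_sum fun i _ ↦ by
        rw [abs_mul, abs_of_nonneg (h0 i)]
        exact mul_le_mul_of_nonneg_left (norm_le_pi_norm d i) (h0 i)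
    _ = ‖d‖ := by rw [← Finset.sum_mul, h1, one_mul]

/-- A function `u`, `1`-Lipschitz for the sup norm, whose gradient `w` takes values in the standard
simplex and which agrees with its first order expansions up to a uniform quadratic error. -/
structure HasSimplexGradient (C : ℝ) (u : (ι → ℝ) → ℝ) (w : (ι → ℝ) → ι → ℝ) : Prop where
  lip : ∀ x d, |u (x + d) - u x| ≤ ‖d‖
  meas : Measurable w
  nonneg : ∀ x i, 0 ≤ w x i
  sum_eq_one : ∀ x, ∑ i, w x i = 1
  taylor : ∀ x d, |u (x + d) - u x - ∑ i, w x i * d i| ≤ C * ‖d‖ ^ 2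

namespace HasSimplexGradient

variable {C : ℝ} {u : (ι → ℝ) → ℝ} {w : (ι → ℝ) → ι → ℝ}

theorem continuous (h : HasSimplexGradient C u w) : Continuous u := by
  refine LipschitzWith.continuous (K := 1) (LipschitzWith.of_dist_le_mul fun x y ↦ ?_)
  have := h.lip y (x - y)
  rwa [add_sub_cancel, ← Real.dist_eq, ← dist_eq_norm, ← one_mul (dist x y)] at this

theorem abs_le (h : HasSimplexGradient C u w) (x : ι → ℝ) : |u x| ≤ |u 0| + ‖x‖ := by
  have := h.lip 0 x
  rw [zero_add] at this
  calc |u x| = |u 0 + (u x - u 0)| := by ring_nf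
    _ ≤ _ := (abs_add_le _ _).trans (by gcongr)

theorem translate (h : HasSimplexGradient C u w) (a : ι → ℝ) :
    HasSimplexGradient C (fun x ↦ u (a + x)) (fun x ↦ w (a + x)) where
  lip x d := by simpa [add_assoc] using h.lip (a + x) d
  meas := h.meas.comp (measurable_const_add a)
  nonneg x := h.nonneg _
  sum_eq_one x := h.sum_eq_one _
  taylor x d := by simpa [add_assoc] using h.taylor (a + x) d

theorem integrable (h : HasSimplexGradient C u w) {M : Measure (ι → ℝ)} [IsProbabilityMeasure M]
    (hM : Integrable (fun x ↦ ‖x‖) M) : Integrable u M :=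
  ((integrable_const |u 0|).add hM).mono' h.continuous.aestronglyMeasurable
    (ae_of_all _ fun x ↦ h.abs_le x)

theorem integrable_exp (h : HasSimplexGradient C u w) {M : Measure (ι → ℝ)} {c : ℝ} (hc : 0 ≤ c)
    (hM : Integrable (fun x ↦ Real.exp (c * ‖x‖)) M) :
    Integrable (fun x ↦ Real.exp (c * u x)) M := by
  have := h.continuous
  refine (hM.const_mul (Real.exp (c * |u 0|))).mono'
    (by fun_prop) (ae_of_all _ fun x ↦ ?_)
  rw [Real.norm_eq_abs, Real.abs_exp, ← Real.exp_add, Real.exp_le_exp, ← mul_add]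
  exact mul_le_mul_of_nonneg_left ((le_abs_self _).trans (h.abs_le x)) hc

theorem integrable_gradient (h : HasSimplexGradient C u w) (M : Measure (ι → ℝ))
    [IsProbabilityMeasure M] (i : ι) : Integrable (fun x ↦ w x i) M := by
  refine (integrable_const (1 : ℝ)).mono' ((measurable_pi_iff.1 h.meas i).aestronglyMeasurable)
    (ae_of_all _ fun x ↦ ?_)
  rw [Real.norm_eq_abs, abs_of_nonneg (h.nonneg x i), ← h.sum_eq_one x]
  exact Finset.single_le_sum (fun j _ ↦ h.nonneg x j) (Finset.mem_univ i)

theorem average (h : HasSimplexGradient C u w) {M : Measure (ι → ℝ)} [IsProbabilityMeasure M]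
    (hM : Integrable (fun x ↦ ‖x‖) M) :
    HasSimplexGradient C (fun x ↦ ∫ y, u (x + y) ∂M) (fun x i ↦ ∫ y, w (x + y) i ∂M) where
  lip x d := by
    rw [← integral_sub ((h.translate _).integrable hM) ((h.translate _).integrable hM)]
    refine abs_integral_le_of_forall_abs_le fun y ↦ ?_
    rw [add_right_comm]
    exact h.lip (x + y) d
  meas := by
    refine measurable_pi_iff.2 fun i ↦ StronglyMeasurable.measurable ?_
    refine StronglyMeasurable.integral_prod_right (f := fun x y ↦ w (x + y) i) ?_
    refine Measurable.stronglyMeasurable ?_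
    exact (measurable_pi_iff.1 h.meas i).comp measurable_add
  nonneg x i := integral_nonneg fun y ↦ h.nonneg _ i
  sum_eq_one x := by
    rw [← integral_finsetSum _ fun i _ ↦ (h.translate x).integrable_gradient M i]
    simp [h.sum_eq_one]
  taylor x d := by
    have e : ∑ i, (∫ y, w (x + y) i ∂M) * d i = ∫ y, ∑ i, w (x + y) i * d i ∂M := by
      rw [integral_finsetSum _ fun i _ ↦ ((h.translate x).integrable_gradient M i).mul_const _]
      simp [integral_mul_const]
    rw [e, ← integral_sub ((h.translate _).integrable hM) ((h.translate _).integrable hM),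
      ← integral_sub]
    rotate_left
    · exact ((h.translate _).integrable hM).sub ((h.translate _).integrable hM)
    · exact integrable_finsetSum _ fun i _ ↦ ((h.translate x).integrable_gradient M i).mul_const _
    refine abs_integral_le_of_forall_abs_le fun y ↦ ?_
    rw [add_right_comm]
    exact h.taylor (x + y) d

end HasSimplexGradient

/-- Every function with simplex-valued gradient has log-Laplace transform at `t` bounded by `K`
under `M`, after centering. -/
def LogLaplaceBound (t C K : ℝ) (M : Measure (ι → ℝ)) : Prop :=
  ∀ u w, HasSimplexGradient C u w →
    ∫ x, Real.exp (t * u x) ∂M ≤ Real.exp (K + t * ∫ x, u x ∂M)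

theorem LogLaplaceBound.conv {t C K₁ K₂ : ℝ} (ht : 0 ≤ t) {M N : Measure (ι → ℝ)}
    [IsProbabilityMeasure M] [IsProbabilityMeasure N]
    (hM : ∀ c, Integrable (fun x ↦ Real.exp (c * ‖x‖)) M)
    (hN' : Integrable (fun x ↦ ‖x‖) N)
    (hMN : ∀ c, Integrable (fun x ↦ Real.exp (c * ‖x‖)) (M ∗ N))
    (hMN' : Integrable (fun x ↦ ‖x‖) (M ∗ N))
    (h₁ : LogLaplaceBound t C K₁ M) (h₂ : LogLaplaceBound t C K₂ N) :
    LogLaplaceBound t C (K₁ + K₂) (M ∗ N) := by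
  intro u w h
  have i1 := h.integrable_exp ht (hMN t)
  rw [integral_conv i1, integral_conv (h.integrable hMN')]
  have hav := h.average hN'
  have i2 : Integrable (fun x ↦ ∫ y, Real.exp (t * u (x + y)) ∂N) M :=
    ((integrable_conv_iff i1.aestronglyMeasurable).1 i1).2.congr (ae_of_all _ fun x ↦ by simp)
  calc ∫ x, ∫ y, Real.exp (t * u (x + y)) ∂N ∂M
      ≤ ∫ x, Real.exp K₂ * Real.exp (t * ∫ y, u (x + y) ∂N) ∂M := by
        refine integral_mono i2 ((hav.integrable_exp ht (hM t)).const_mul _) fun x ↦ ?_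
        rw [← Real.exp_add]
        exact h₂ _ _ (h.translate x)
    _ ≤ Real.exp K₂ * Real.exp (K₁ + t * ∫ x, ∫ y, u (x + y) ∂N ∂M) := by
        rw [integral_const_mul]
        exact mul_le_mul_of_nonneg_left (h₁ _ _ hav) (Real.exp_nonneg _)
    _ = _ := by rw [← Real.exp_add]; ring_nf

theorem Real.exp_le_quadratic_add_cubic (z : ℝ) :
    Real.exp z ≤ 1 + z + z ^ 2 / 2 + |z| ^ 3 * Real.exp |z| := by
  have h := Complex.norm_exp_sub_sum_le_norm_mul_exp (z : ℂ) 3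
  have e : Complex.exp z - ∑ m ∈ Finset.range 3, (z : ℂ) ^ m / (m.factorial : ℂ)
      = ((Real.exp z - (1 + z + z ^ 2 / 2) : ℝ) : ℂ) := by
    simp [Finset.sum_range_succ, Nat.factorial]
  rw [e, Complex.norm_real, Complex.norm_real, Real.norm_eq_abs, Real.norm_eq_abs] at h
  linarith [le_abs_self (Real.exp z - (1 + z + z ^ 2 / 2))]

theorem integral_sq_sum_mul_le {M : Measure (ι → ℝ)} {v : ℝ}
    (hsq : ∀ i, Integrable (fun x ↦ x i ^ 2) M) (hv : ∀ i, ∫ x, x i ^ 2 ∂M ≤ v)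
    {w : ι → ℝ} (h0 : ∀ i, 0 ≤ w i) (h1 : ∑ i, w i = 1) :
    Integrable (fun x ↦ (∑ i, w i * x i) ^ 2) M ∧ ∫ x, (∑ i, w i * x i) ^ 2 ∂M ≤ v := by
  have hle (x : ι → ℝ) : (∑ i, w i * x i) ^ 2 ≤ ∑ i, w i * x i ^ 2 := by
    simpa using even_two.convexOn_pow.map_sum_le (t := Finset.univ)
      (w := w) (p := x) (fun i _ ↦ h0 i) h1 (fun i _ ↦ Set.mem_univ _)
  have hint : Integrable (fun x ↦ ∑ i, w i * x i ^ 2) M :=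
    integrable_finsetSum _ fun i _ ↦ (hsq i).const_mul _
  have hint' : Integrable (fun x ↦ (∑ i, w i * x i) ^ 2) M :=
    hint.mono' (Continuous.aestronglyMeasurable (by fun_prop)) (ae_of_all _ fun x ↦ by
      rw [Real.norm_eq_abs, abs_of_nonneg (sq_nonneg _)]; exact hle x)
  refine ⟨hint', (integral_mono hint' hint hle).trans ?_⟩
  rw [integral_finsetSum _ fun i _ ↦ (hsq i).const_mul _]
  calc ∑ i, ∫ x, w i * x i ^ 2 ∂M ≤ ∑ i, w i * v := Finset.sum_le_sum fun i _ ↦ by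
        rw [integral_const_mul]
        exact mul_le_mul_of_nonneg_left (hv i) (h0 i)
    _ = v := by rw [← Finset.sum_mul, h1, one_mul]

theorem HasSimplexGradient.exp_le_of_scaled {C : ℝ} {u : (ι → ℝ) → ℝ} {w : (ι → ℝ) → ι → ℝ}
    (h : HasSimplexGradient C u w) (hC : 0 ≤ C) {t s : ℝ} (ht : 0 ≤ t) (hs : 0 ≤ s) (hs1 : s ≤ 1)
    {T m q : ℝ} (hm : 0 ≤ m) (hq : 0 ≤ q) (hT : |T - u 0| ≤ s * m)
    (hT' : |T - u 0| ≤ C * s ^ 2 * q) (y : ι → ℝ) :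
    Real.exp (t * (u (s • y) - T)) ≤ 1 + t * (u (s • y) - T)
      + t ^ 2 * s ^ 2 / 2 * (∑ i, w 0 i * y i) ^ 2
      + s ^ 3 * (t * C * (2 + q) * Real.exp (‖y‖ + t * (‖y‖ + m))
        + 6 * Real.exp (2 * (t * (‖y‖ + m)))) := by
  set R := t * (‖y‖ + m) with hR
  set l := ∑ i, w 0 i * y i with hl
  set z := t * (u (s • y) - T) with hz
  have hn : ‖s • y‖ = s * ‖y‖ := by rw [norm_smul, Real.norm_eq_abs, abs_of_nonneg hs]
  have hR0 : 0 ≤ R := by positivity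
  have hl1 : |t * s * l| ≤ s * R := by
    rw [abs_mul, abs_of_nonneg (by positivity)]
    have := abs_sum_mul_le_norm (h.nonneg 0) (h.sum_eq_one 0) y
    calc t * s * |l| ≤ t * s * (‖y‖ + m) := by gcongr; linarith
      _ = s * R := by rw [hR]; ring
  have hlip := h.lip 0 (s • y)
  have htay := h.taylor 0 (s • y)
  have hsum : ∑ i, w 0 i * (s • y) i = s * l := by
    rw [hl, Finset.mul_sum]; exact Finset.sum_congr rfl fun i _ ↦ by simp; ring
  rw [zero_add, hn] at hlip htay
  rw [hsum] at htay
  have hz1 : |z| ≤ s * R := by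
    rw [hz, abs_mul, abs_of_nonneg ht]
    calc t * |u (s • y) - T| = t * |(u (s • y) - u 0) - (T - u 0)| := by ring_nf
      _ ≤ t * (s * ‖y‖ + s * m) := by
          gcongr; exact (abs_sub _ _).trans (add_le_add hlip hT)
      _ = s * R := by rw [hR]; ring
  have hd : |z - t * s * l| ≤ t * C * s ^ 2 * (‖y‖ ^ 2 + q) := by
    calc |z - t * s * l| = t * |(u (s • y) - u 0 - s * l) - (T - u 0)| := by
          rw [hz, ← abs_of_nonneg ht, ← abs_mul, abs_of_nonneg ht]; ring_nf
      _ ≤ t * (C * (s * ‖y‖) ^ 2 + C * s ^ 2 * q) := by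
          gcongr; exact (abs_sub _ _).trans (add_le_add htay hT')
      _ = _ := by ring
  have hexp1 : ‖y‖ ^ 2 + q ≤ (2 + q) * Real.exp ‖y‖ := by
    have h2 := Real.pow_div_factorial_le_exp ‖y‖ (norm_nonneg y) 2
    have h1 := Real.one_le_exp (norm_nonneg y)
    norm_num [Nat.factorial] at h2
    nlinarith
  have hexp2 : R ≤ Real.exp R := by linarith [Real.add_one_le_exp R]
  have hexp3 : R ^ 3 ≤ 6 * Real.exp R := by
    have h3 := Real.pow_div_factorial_le_exp R hR0 3
    norm_num [Nat.factorial] at h3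
    linarith
  have hsq : z ^ 2 / 2 ≤ t ^ 2 * s ^ 2 / 2 * l ^ 2
      + s ^ 3 * (t * C * (2 + q) * Real.exp (‖y‖ + R)) := by
    have h4 : (z - t * s * l) * (z + t * s * l) ≤
        (t * C * s ^ 2 * ((2 + q) * Real.exp ‖y‖)) * (2 * s * Real.exp R) := by
      refine (le_abs_self _).trans ?_
      rw [abs_mul]
      gcongr
      · exact hd.trans (by gcongr)
      · calc |z + t * s * l| ≤ s * R + s * R := (abs_add_le _ _).trans (add_le_add hz1 hl1)
          _ ≤ 2 * s * Real.exp R := by nlinarith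
    rw [Real.exp_add]
    linarith
  have hcub : |z| ^ 3 * Real.exp |z| ≤ s ^ 3 * (6 * Real.exp (2 * R)) := by
    have hz2 : |z| ≤ R := hz1.trans (mul_le_of_le_one_left hR0 hs1)
    calc |z| ^ 3 * Real.exp |z| ≤ (s * R) ^ 3 * Real.exp R := by gcongr
      _ = s ^ 3 * (R ^ 3 * Real.exp R) := by ring
      _ ≤ s ^ 3 * (6 * Real.exp R * Real.exp R) := by gcongr
      _ = _ := by rw [two_mul, Real.exp_add]; ring
  linarith [Real.exp_le_quadratic_add_cubic z]

theorem exists_logLaplaceBound_map_smul {μ : Measure (ι → ℝ)} [IsProbabilityMeasure μ]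
    (hexp : ∀ c, Integrable (fun x ↦ Real.exp (c * ‖x‖)) μ)
    (hn : Integrable (fun x ↦ ‖x‖) μ) (hn2 : Integrable (fun x ↦ ‖x‖ ^ 2) μ)
    (hmean : ∀ i, ∫ x, x i ∂μ = 0) {v : ℝ} (hv : ∀ i, ∫ x, x i ^ 2 ∂μ ≤ v)
    {t C : ℝ} (ht : 0 ≤ t) (hC : 0 ≤ C) :
    ∃ K, ∀ s, 0 ≤ s → s ≤ 1 →
      LogLaplaceBound t C (t ^ 2 * v / 2 * s ^ 2 + K * s ^ 3) (μ.map (s • ·)) := by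
  set m := ∫ x, ‖x‖ ∂μ with hm
  set q := ∫ x, ‖x‖ ^ 2 ∂μ with hq
  have hm0 : 0 ≤ m := integral_nonneg fun x ↦ norm_nonneg x
  have hq0 : 0 ≤ q := integral_nonneg fun x ↦ by positivity
  set H : (ι → ℝ) → ℝ := fun y ↦ t * C * (2 + q) * Real.exp (‖y‖ + t * (‖y‖ + m))
        + 6 * Real.exp (2 * (t * (‖y‖ + m))) with hH
  have hHint : Integrable H μ := by
    have e1 : H = fun y ↦ t * C * (2 + q) * Real.exp (t * m) * Real.exp ((1 + t) * ‖y‖)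
        + 6 * Real.exp (2 * t * m) * Real.exp ((2 * t) * ‖y‖) := by
      ext y
      simp only [hH, mul_assoc, ← Real.exp_add]
      ring_nf
    rw [e1]
    exact ((hexp _).const_mul _).add ((hexp _).const_mul _)
  have hcoord (i : ι) : Integrable (fun x : ι → ℝ ↦ x i) μ :=
    hn.mono' (continuous_apply i).aestronglyMeasurable (ae_of_all _ fun x ↦ norm_le_pi_norm x i)
  have hcoord2 (i : ι) : Integrable (fun x : ι → ℝ ↦ x i ^ 2) μ :=
    hn2.mono' ((continuous_apply i).pow 2).aestronglyMeasurable (ae_of_all _ fun x ↦ by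
      rw [norm_pow]; gcongr; exact norm_le_pi_norm x i)
  refine ⟨∫ y, H y ∂μ, fun s hs hs1 u w h ↦ ?_⟩
  have hcont := h.continuous
  rw [integral_map (by fun_prop) (by fun_prop), integral_map (by fun_prop) (by fun_prop)]
  set T := ∫ y, u (s • y) ∂μ with hT
  have hnorm (y : ι → ℝ) : ‖s • y‖ = s * ‖y‖ := by
    rw [norm_smul, Real.norm_eq_abs, abs_of_nonneg hs]
  have hu : Integrable (fun y ↦ u (s • y)) μ := by
    refine ((integrable_const |u 0|).add (hn.const_mul s)).mono' (by fun_prop)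
      (ae_of_all _ fun x ↦ ?_)
    have := h.abs_le (s • x)
    rwa [hnorm] at this
  have hue : Integrable (fun y ↦ Real.exp (t * u (s • y))) μ := by
    refine ((hexp (t * s)).const_mul (Real.exp (t * |u 0|))).mono' (by fun_prop)
      (ae_of_all _ fun x ↦ ?_)
    rw [Real.norm_eq_abs, Real.abs_exp, ← Real.exp_add, Real.exp_le_exp, mul_assoc, ← mul_add,
      ← hnorm]
    exact mul_le_mul_of_nonneg_left ((le_abs_self _).trans (h.abs_le _)) ht
  have hTu : T - u 0 = ∫ y, (u (s • y) - u 0) ∂μ := by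
    rw [integral_sub hu (integrable_const _)]; simp [hT]
  have hT1 : |T - u 0| ≤ s * m := by
    rw [hTu, hm, ← integral_const_mul, ← Real.norm_eq_abs]
    refine norm_integral_le_of_norm_le (hn.const_mul s) (ae_of_all _ fun y ↦ ?_)
    have := h.lip 0 (s • y)
    rwa [zero_add, hnorm] at this
  have hlin : Integrable (fun y : ι → ℝ ↦ ∑ i, w 0 i * (s • y) i) μ :=
    integrable_finsetSum _ fun i _ ↦ ((hcoord i).const_mul s).const_mul _
  have hlin0 : ∫ y : ι → ℝ, ∑ i, w 0 i * (s • y) i ∂μ = 0 := by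
    simp only [Pi.smul_apply, smul_eq_mul]
    rw [integral_finsetSum _ fun i _ ↦ ((hcoord i).const_mul s).const_mul _]
    simp [integral_const_mul, hmean]
  have hT2 : |T - u 0| ≤ C * s ^ 2 * q := by
    have e : T - u 0 = ∫ y, (u (s • y) - u 0 - ∑ i, w 0 i * (s • y) i) ∂μ := by
      have hu0 : Integrable (fun y ↦ u (s • y) - u 0) μ := hu.sub (integrable_const _)
      rw [integral_sub hu0 hlin, hlin0, hTu, sub_zero]
    rw [e, hq, ← integral_const_mul, ← Real.norm_eq_abs]
    refine norm_integral_le_of_norm_le (hn2.const_mul _) (ae_of_all _ fun y ↦ ?_)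
    have := h.taylor 0 (s • y)
    rwa [zero_add, hnorm, mul_pow, ← mul_assoc] at this
  obtain ⟨hsqi, hsqv⟩ := integral_sq_sum_mul_le hcoord2 hv (h.nonneg 0) (h.sum_eq_one 0)
  have hz : Integrable (fun y ↦ t * (u (s • y) - T)) μ := (hu.sub (integrable_const _)).const_mul t
  have hz0 : ∫ y, t * (u (s • y) - T) ∂μ = 0 := by
    rw [integral_const_mul, integral_sub hu (integrable_const _)]; simp [hT]
  have i1 : Integrable (fun y ↦ 1 + t * (u (s • y) - T)) μ := (integrable_const _).add hz
  have i2 : Integrable (fun y ↦ t ^ 2 * s ^ 2 / 2 * (∑ i, w 0 i * y i) ^ 2) μ := hsqi.const_mul _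
  have i12 : Integrable (fun y ↦ 1 + t * (u (s • y) - T)
      + t ^ 2 * s ^ 2 / 2 * (∑ i, w 0 i * y i) ^ 2) μ := i1.add i2
  have i3 : Integrable (fun y ↦ s ^ 3 * H y) μ := hHint.const_mul _
  have e (y : ι → ℝ) :
      Real.exp (t * u (s • y)) = Real.exp (t * T) * Real.exp (t * (u (s • y) - T)) := by
    rw [← Real.exp_add]; ring_nf
  calc ∫ y, Real.exp (t * u (s • y)) ∂μ
      ≤ ∫ y, Real.exp (t * T) * (1 + t * (u (s • y) - T)
          + t ^ 2 * s ^ 2 / 2 * (∑ i, w 0 i * y i) ^ 2 + s ^ 3 * H y) ∂μ := by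
        refine integral_mono hue ((i12.add i3).const_mul _) fun y ↦ ?_
        simp only [e]
        exact mul_le_mul_of_nonneg_left
          (h.exp_le_of_scaled hC ht hs hs1 hm0 hq0 hT1 hT2 y) (Real.exp_nonneg _)
    _ = Real.exp (t * T) * (1 + t ^ 2 * s ^ 2 / 2 * ∫ y, (∑ i, w 0 i * y i) ^ 2 ∂μ
          + s ^ 3 * ∫ y, H y ∂μ) := by
        rw [integral_const_mul, integral_add i12 i3, integral_add i1 i2,
          integral_add (integrable_const _) hz, hz0, integral_const_mul, integral_const_mul]
        simp
    _ ≤ Real.exp (t * T) * (t ^ 2 * v / 2 * s ^ 2 + (∫ y, H y ∂μ) * s ^ 3 + 1) := by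
        refine mul_le_mul_of_nonneg_left ?_ (Real.exp_nonneg _)
        have : t ^ 2 * s ^ 2 / 2 * ∫ y, (∑ i, w 0 i * y i) ^ 2 ∂μ ≤ t ^ 2 * s ^ 2 / 2 * v := by
          gcongr
        linarith
    _ ≤ Real.exp (t * T) * Real.exp (t ^ 2 * v / 2 * s ^ 2 + (∫ y, H y ∂μ) * s ^ 3) := by
        gcongr
        exact Real.add_one_le_exp _
    _ = _ := by rw [← Real.exp_add, add_comm]

theorem logLaplaceBound_of_isGaussian (μ : Measure (ι → ℝ)) [IsGaussian μ]
    (hmean : ∀ i, ∫ x, x i ∂μ = 0) {v : ℝ} (hv : ∀ i, ∫ x, x i ^ 2 ∂μ ≤ v)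
    {t C : ℝ} (ht : 0 ≤ t) (hC : 0 ≤ C) : LogLaplaceBound t C (t ^ 2 * v / 2) μ := by
  have hnorm (M : Measure (ι → ℝ)) [IsGaussian M] : Integrable (fun x ↦ ‖x‖) M :=
    IsGaussian.integrable_id.norm
  have hn2 : Integrable (fun x ↦ ‖x‖ ^ 2) μ :=
    (IsGaussian.memLp_id μ 2 (by simp)).integrable_norm_pow (by simp)
  have hcoord (i : ι) : Integrable (fun x : ι → ℝ ↦ x i) μ :=
    (hnorm μ).mono' (continuous_apply i).aestronglyMeasurable
      (ae_of_all _ fun x ↦ norm_le_pi_norm x i)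
  have hdual (L : StrongDual ℝ (ι → ℝ)) : ∫ x, L x ∂μ = 0 := by
    classical
    have e (x : ι → ℝ) : L x = ∑ i, x i * L (Pi.single i 1) := by
      conv_lhs => rw [pi_eq_sum_univ' x]
      simp only [map_sum, map_smul, smul_eq_mul]
    rw [integral_congr_ae (ae_of_all μ e),
      integral_finsetSum _ fun i _ ↦ (hcoord i).mul_const _]
    simp [integral_mul_const, hmean]
  obtain ⟨K, hK⟩ := exists_logLaplaceBound_map_smul
    (integrable_exp_mul_norm_of_isGaussian μ) (hnorm μ) hn2 hmean hv ht hC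
  have double {s L : ℝ} (h : LogLaplaceBound t C L (μ.map (s • ·))) :
      LogLaplaceBound t C (L + L) (μ.map ((√2 * s) • ·)) := by
    have hconv : (μ.map (s • ·)) ∗ (μ.map (s • ·)) = μ.map ((√2 * s) • ·) :=
      map_smul_conv_map_smul_of_centered μ hdual (by rw [mul_pow, Real.sq_sqrt zero_le_two]; ring)
    have := isGaussian_map_smul μ s
    have := isGaussian_map_smul μ (√2 * s)
    rw [← hconv]
    refine LogLaplaceBound.conv ht (integrable_exp_mul_norm_of_isGaussian _) (hnorm _)
      ?_ ?_ h h <;> rw [hconv]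
    · exact integrable_exp_mul_norm_of_isGaussian _
    · exact hnorm _
  have iter (n : ℕ) : ∀ {s L : ℝ}, LogLaplaceBound t C L (μ.map (s • ·)) →
      LogLaplaceBound t C (2 ^ n * L) (μ.map ((√2 ^ n * s) • ·)) := by
    induction n with
    | zero => intro s L h; simpa using h
    | succ n ih =>
      intro s L h
      have := double (ih h)
      convert this using 1
      · ring
      · simp only [pow_succ']; ring_nf
  have hsq : √2 ^ 2 = 2 := Real.sq_sqrt zero_le_two
  have hs1 : 1 < √2 := by rw [Real.lt_sqrt] <;> norm_num
  have hr0 : 0 < (√2)⁻¹ := by positivity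
  have hr1 : (√2)⁻¹ < 1 := inv_lt_one_of_one_lt₀ hs1
  have bound (n : ℕ) : LogLaplaceBound t C (t ^ 2 * v / 2 + K * (√2)⁻¹ ^ n) μ := by
    have := iter n (hK ((√2)⁻¹ ^ n) (by positivity) (pow_le_one₀ hr0.le hr1.le))
    have e1 : √2 ^ n * (√2)⁻¹ ^ n = 1 := by
      rw [← mul_pow, mul_inv_cancel₀ (by positivity), one_pow]
    have e2 : (2 : ℝ) ^ n = √2 ^ n * √2 ^ n := by rw [← mul_pow, ← sq, hsq]
    have e3 : 2 ^ n * (t ^ 2 * v / 2 * ((√2)⁻¹ ^ n) ^ 2 + K * ((√2)⁻¹ ^ n) ^ 3)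
        = t ^ 2 * v / 2 + K * (√2)⁻¹ ^ n := by
      rw [e2]
      linear_combination (t ^ 2 * v / 2 + K * (√2)⁻¹ ^ n) * (√2 ^ n * (√2)⁻¹ ^ n + 1) * e1
    simpa only [e1, e3, one_smul, Measure.map_id'] using this
  intro u w h
  have hlim : Filter.Tendsto
      (fun n : ℕ ↦ Real.exp (t ^ 2 * v / 2 + K * (√2)⁻¹ ^ n + t * ∫ x, u x ∂μ)) Filter.atTop
      (nhds (Real.exp (t ^ 2 * v / 2 + K * 0 + t * ∫ x, u x ∂μ))) :=
    (Real.continuous_exp.tendsto _).comp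
      (((tendsto_pow_atTop_nhds_zero_of_lt_one hr0.le hr1).const_mul K).const_add _ |>.add_const _)
  rw [mul_zero, add_zero] at hlim
  exact ge_of_tendsto' hlim fun n ↦ bound n u w h

/-- The soft maximum of `x` at inverse temperature `b`. -/
noncomputable def softMax (b : ℝ) (x : ι → ℝ) : ℝ := Real.log (∑ i, Real.exp (b * x i)) / b

/-- The Gibbs weights at inverse temperature `b`, which form the gradient of `softMax b`. -/
noncomputable def gibbsWeight (b : ℝ) (x : ι → ℝ) (i : ι) : ℝ :=
  Real.exp (b * x i) / ∑ j, Real.exp (b * x j)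

section

variable [Nonempty ι]

theorem sum_exp_pos (b : ℝ) (x : ι → ℝ) : 0 < ∑ i, Real.exp (b * x i) :=
  Finset.sum_pos (fun _ _ ↦ Real.exp_pos _) Finset.univ_nonempty

theorem sum_gibbsWeight (b : ℝ) (x : ι → ℝ) : ∑ i, gibbsWeight b x i = 1 := by
  simp only [gibbsWeight]
  rw [← Finset.sum_div, div_self (sum_exp_pos b x).ne']

theorem softMax_add_sub (b : ℝ) (x d : ι → ℝ) :
    softMax b (x + d) - softMax b x
      = Real.log (∑ i, gibbsWeight b x i * Real.exp (b * d i)) / b := by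
  rw [softMax, softMax, ← sub_div, ← Real.log_div (sum_exp_pos _ _).ne' (sum_exp_pos _ _).ne',
    Finset.sum_div]
  congr 2
  refine Finset.sum_congr rfl fun i _ ↦ ?_
  rw [gibbsWeight, Pi.add_apply, mul_add, Real.exp_add]
  ring

theorem hasSimplexGradient_softMax {b : ℝ} (hb : 0 < b) :
    HasSimplexGradient (2 * b) (softMax (ι := ι) b) (gibbsWeight b) := by
  have hw0 (x : ι → ℝ) (i : ι) : 0 ≤ gibbsWeight b x i :=
    div_nonneg (Real.exp_nonneg _) (sum_exp_pos b x).le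
  have hpos (x d : ι → ℝ) : 0 < ∑ i, gibbsWeight b x i * Real.exp (b * d i) :=
    Finset.sum_pos (fun i _ ↦ mul_pos (div_pos (Real.exp_pos _) (sum_exp_pos b x))
      (Real.exp_pos _)) Finset.univ_nonempty
  have hupper (x d : ι → ℝ) : softMax b (x + d) - softMax b x ≤ ‖d‖ := by
    rw [softMax_add_sub, div_le_iff₀ hb, Real.log_le_iff_le_exp (hpos x d)]
    calc ∑ i, gibbsWeight b x i * Real.exp (b * d i)
        ≤ ∑ i, gibbsWeight b x i * Real.exp (‖d‖ * b) := by
          refine Finset.sum_le_sum fun i _ ↦ mul_le_mul_of_nonneg_left ?_ (hw0 x i)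
          rw [Real.exp_le_exp, mul_comm]
          exact mul_le_mul_of_nonneg_right ((le_abs_self _).trans (norm_le_pi_norm d i)) hb.le
      _ = _ := by rw [← Finset.sum_mul, sum_gibbsWeight, one_mul]
  have hlower (x d : ι → ℝ) :
      ∑ i, gibbsWeight b x i * d i ≤ softMax b (x + d) - softMax b x := by
    rw [softMax_add_sub, le_div_iff₀ hb, Real.le_log_iff_exp_le (hpos x d)]
    have := convexOn_exp.map_sum_le (t := Finset.univ) (w := gibbsWeight b x)
      (p := fun i ↦ b * d i) (fun i _ ↦ hw0 x i) (sum_gibbsWeight b x) (fun i _ ↦ Set.mem_univ _)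
    simp only [smul_eq_mul] at this
    refine le_trans (le_of_eq ?_) this
    rw [Finset.sum_mul]
    exact congrArg _ (Finset.sum_congr rfl fun i _ ↦ by ring)
  have hlin (x d : ι → ℝ) := abs_sum_mul_le_norm (hw0 x) (sum_gibbsWeight b x) d
  refine ⟨fun x d ↦ abs_le.2 ⟨(abs_le.1 (hlin x d)).1.trans (hlower x d), hupper x d⟩, ?_, hw0,
    sum_gibbsWeight b, fun x d ↦ ?_⟩
  · refine measurable_pi_iff.2 fun i ↦ ?_
    unfold gibbsWeight
    fun_prop
  · rw [abs_of_nonneg (sub_nonneg.2 (hlower x d))]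
    rcases le_total (b * ‖d‖) 1 with h1 | h1
    · suffices softMax b (x + d) - softMax b x ≤ ∑ i, gibbsWeight b x i * d i + b * ‖d‖ ^ 2 by
        nlinarith [mul_nonneg hb.le (sq_nonneg ‖d‖)]
      rw [softMax_add_sub, div_le_iff₀ hb]
      refine (Real.log_le_sub_one_of_pos (hpos x d)).trans ?_
      have key : ∑ i, gibbsWeight b x i * Real.exp (b * d i)
          ≤ ∑ i, gibbsWeight b x i * (1 + b * d i + (b * ‖d‖) ^ 2) := by
        refine Finset.sum_le_sum fun i _ ↦ mul_le_mul_of_nonneg_left ?_ (hw0 x i)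
        have hi : |b * d i| ≤ b * ‖d‖ := by
          rw [abs_mul, abs_of_pos hb]
          exact mul_le_mul_of_nonneg_left (norm_le_pi_norm d i) hb.le
        have h2 := (abs_le.1 (Real.abs_exp_sub_one_sub_id_le (hi.trans h1))).2
        have h3 : (b * d i) ^ 2 ≤ (b * ‖d‖) ^ 2 := by rw [← sq_abs]; gcongr
        linarith
      have e : ∑ i, gibbsWeight b x i * (1 + b * d i + (b * ‖d‖) ^ 2)
          = 1 + b * ∑ i, gibbsWeight b x i * d i + (b * ‖d‖) ^ 2 := by
        simp only [mul_add, Finset.sum_add_distrib, ← Finset.sum_mul, sum_gibbsWeight, mul_one,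
          one_mul, Finset.mul_sum]
        congr 2
        exact Finset.sum_congr rfl fun i _ ↦ by ring
      linarith
    · have h4 := (abs_le.1 (hlin x d)).1
      have h5 := hupper x d
      nlinarith [mul_le_mul_of_nonneg_right h1 (norm_nonneg d)]

theorem iSup_le_softMax {b : ℝ} (hb : 0 < b) (x : ι → ℝ) : ⨆ i, x i ≤ softMax b x := by
  refine ciSup_le fun i ↦ ?_
  rw [softMax, le_div_iff₀ hb, Real.le_log_iff_exp_le (sum_exp_pos b x), mul_comm]
  exact Finset.single_le_sum (f := fun i ↦ Real.exp (b * x i)) (fun j _ ↦ Real.exp_nonneg _)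
    (Finset.mem_univ i)

theorem softMax_le_iSup_add {b : ℝ} (hb : 0 < b) (x : ι → ℝ) :
    softMax b x ≤ (⨆ i, x i) + Real.log (Fintype.card ι) / b := by
  have hc : (0 : ℝ) < Fintype.card ι := by exact_mod_cast Fintype.card_pos
  rw [softMax, div_le_iff₀ hb, add_mul, div_mul_cancel₀ _ hb.ne',
    Real.log_le_iff_le_exp (sum_exp_pos b x), Real.exp_add, Real.exp_log hc]
  calc ∑ i, Real.exp (b * x i) ≤ ∑ _i : ι, Real.exp ((⨆ i, x i) * b) := by
        refine Finset.sum_le_sum fun i _ ↦ ?_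
        rw [Real.exp_le_exp, mul_comm]
        exact mul_le_mul_of_nonneg_right (le_ciSup (Finite.bddAbove_range x) i) hb.le
    _ = _ := by simp [mul_comm]

theorem abs_iSup_le_norm (x : ι → ℝ) : |⨆ i, x i| ≤ ‖x‖ := by
  obtain ⟨i, hi⟩ := exists_eq_ciSup_of_finite (f := x)
  rw [← hi]
  exact norm_le_pi_norm x i

theorem integral_exp_iSup_le_of_isGaussian (μ : Measure (ι → ℝ)) [IsGaussian μ]
    (hmean : ∀ i, ∫ x, x i ∂μ = 0) {v : ℝ} (hv : ∀ i, ∫ x, x i ^ 2 ∂μ ≤ v) {t : ℝ} (ht : 0 ≤ t) :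
    Integrable (fun x ↦ Real.exp (t * ⨆ i, x i)) μ ∧
    ∫ x, Real.exp (t * ⨆ i, x i) ∂μ ≤ Real.exp (t ^ 2 * v / 2 + t * ∫ x, ⨆ i, x i ∂μ) := by
  have hnorm : Integrable (fun x ↦ ‖x‖) μ := IsGaussian.integrable_id.norm
  have hmeas : Measurable fun x : ι → ℝ ↦ ⨆ i, x i := Measurable.iSup measurable_pi_apply
  have hsup : Integrable (fun x : ι → ℝ ↦ ⨆ i, x i) μ :=
    hnorm.mono' hmeas.aestronglyMeasurable (ae_of_all _ abs_iSup_le_norm)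
  have hexp : Integrable (fun x : ι → ℝ ↦ Real.exp (t * ⨆ i, x i)) μ := by
    refine (integrable_exp_mul_norm_of_isGaussian μ t).mono'
      (Measurable.aestronglyMeasurable (by fun_prop)) (ae_of_all _ fun x ↦ ?_)
    rw [Real.norm_eq_abs, Real.abs_exp, Real.exp_le_exp]
    exact mul_le_mul_of_nonneg_left ((le_abs_self _).trans (abs_iSup_le_norm x)) ht
  refine ⟨hexp, ?_⟩
  have bound (n : ℕ) : ∫ x, Real.exp (t * ⨆ i, x i) ∂μ ≤ Real.exp (t ^ 2 * v / 2
      + t * (∫ x, ⨆ i, x i ∂μ + Real.log (Fintype.card ι) / ((n : ℝ) + 1))) := by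
    have hb : (0 : ℝ) < (n : ℝ) + 1 := by positivity
    have h := hasSimplexGradient_softMax (ι := ι) hb
    calc ∫ x, Real.exp (t * ⨆ i, x i) ∂μ ≤ ∫ x, Real.exp (t * softMax ((n : ℝ) + 1) x) ∂μ := by
          refine integral_mono hexp
            (h.integrable_exp ht (integrable_exp_mul_norm_of_isGaussian μ t)) fun x ↦ ?_
          exact Real.exp_le_exp.2 (mul_le_mul_of_nonneg_left (iSup_le_softMax hb x) ht)
      _ ≤ Real.exp (t ^ 2 * v / 2 + t * ∫ x, softMax ((n : ℝ) + 1) x ∂μ) :=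
          logLaplaceBound_of_isGaussian μ hmean hv ht (by positivity) _ _ h
      _ ≤ _ := by
          refine Real.exp_le_exp.2 (add_le_add_right (mul_le_mul_of_nonneg_left ?_ ht) _)
          refine (integral_mono (h.integrable hnorm) (hsup.add (integrable_const _))
            fun x ↦ softMax_le_iSup_add hb x).trans_eq ?_
          simp [integral_add hsup (integrable_const _)]
  have hlim : Filter.Tendsto (fun n : ℕ ↦ Real.exp (t ^ 2 * v / 2
      + t * (∫ x, ⨆ i, x i ∂μ + Real.log (Fintype.card ι) / ((n : ℝ) + 1)))) Filter.atTop
      (nhds (Real.exp (t ^ 2 * v / 2 + t * (∫ x, ⨆ i, x i ∂μ + 0)))) :=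
    (Real.continuous_exp.tendsto _).comp
      ((((tendsto_const_div_atTop_nhds_zero_nat (Real.log (Fintype.card ι))).comp
        (Filter.tendsto_add_atTop_nat 1)
        |>.congr fun n ↦ by simp).const_add _ |>.const_mul _).const_add _)
  rw [add_zero] at hlim
  exact ge_of_tendsto' hlim bound

end

end SoftMaximum

/-- Modified Borell inequality: if `X 0, ..., X (p-1)` are jointly Gaussian mean-zero
random variables with `σ² = max_i Var(X i)` finite and nonzero, then for any `l > 0`,
`P(max_i X i > E[max_i X i] + l) ≤ exp(-l²/(2σ²))`. -/
theorem modified_borell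
    {Ω : Type*} [MeasurableSpace Ω] (P : Measure Ω) [IsProbabilityMeasure P]
    (p : ℕ) (hp : 0 < p) (X : Fin p → Ω → ℝ) (hmeas : ∀ i, Measurable (X i))
    (hGauss : ∀ c : Fin p → ℝ, ∃ v : NNReal,
      Measure.map (fun ω => ∑ i, c i * X i ω) P = gaussianReal 0 v)
    (hmean : ∀ i, ∫ ω, X i ω ∂P = 0)
    (σ2 : ℝ) (hσ2 : σ2 = ⨆ i, variance (X i) P) (hσ2pos : 0 < σ2) :
    ∀ l : ℝ, 0 < l →
      (P {ω | (∫ ω', (⨆ i, X i ω') ∂P) + l < ⨆ i, X i ω}).toReal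
        ≤ Real.exp (-(l ^ 2) / (2 * σ2)) := by
  intro l hl
  have : Nonempty (Fin p) := ⟨⟨0, hp⟩⟩
  set Y : Ω → Fin p → ℝ := fun ω i ↦ X i ω with hY
  have hYm : Measurable Y := measurable_pi_iff.2 hmeas
  have hg : IsGaussian (P.map Y) := by
    refine isGaussian_of_map_eq_gaussianReal fun L ↦ ?_
    obtain ⟨v, hv⟩ := hGauss fun i ↦ L (Pi.single i 1)
    refine ⟨0, v, ?_⟩
    rw [Measure.map_map (by fun_prop) hYm, ← hv]
    congr 1
    ext ω
    simp only [Function.comp_apply]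
    conv_lhs => rw [pi_eq_sum_univ' (Y ω)]
    simp [hY, mul_comm]
  have hmap {f : (Fin p → ℝ) → ℝ} (hf : Measurable f) : ∫ x, f x ∂(P.map Y) = ∫ ω, f (Y ω) ∂P :=
    integral_map hYm.aemeasurable hf.aestronglyMeasurable
  have hsupm : Measurable fun x : Fin p → ℝ ↦ ⨆ i, x i := Measurable.iSup measurable_pi_apply
  have hv (i : Fin p) : ∫ x, x i ^ 2 ∂(P.map Y) ≤ σ2 := by
    rw [hmap (by fun_prop), hσ2]
    refine le_trans (le_of_eq ?_) (le_ciSup (Finite.bddAbove_range _) i)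
    exact (variance_of_integral_eq_zero (hmeas i).aemeasurable (hmean i)).symm
  have hm (i : Fin p) : ∫ x, x i ∂(P.map Y) = 0 := (hmap (by fun_prop)).trans (hmean i)
  set t := l / σ2 with ht
  have ht0 : 0 ≤ t := by positivity
  obtain ⟨hint, hle⟩ := integral_exp_iSup_le_of_isGaussian (P.map Y) hm hv ht0
  rw [hmap (by fun_prop), hmap hsupm] at hle
  set m := ∫ ω, (⨆ i, X i ω) ∂P with hm'
  have hint' : Integrable (fun ω ↦ Real.exp (t * ⨆ i, X i ω)) P :=
    (integrable_map_measure hint.aestronglyMeasurable hYm.aemeasurable).1 hint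
  calc (P {ω | m + l < ⨆ i, X i ω}).toReal
      ≤ P.real {ω | m + l ≤ ⨆ i, X i ω} :=
        measureReal_mono fun ω (hω : m + l < _) ↦ hω.le
    _ ≤ Real.exp (-t * (m + l)) * mgf (fun ω ↦ ⨆ i, X i ω) P t :=
        measure_ge_le_exp_mul_mgf _ ht0 hint'
    _ ≤ Real.exp (-t * (m + l)) * Real.exp (t ^ 2 * σ2 / 2 + t * m) := by
        gcongr
        exact hle
    _ = Real.exp (-(l ^ 2) / (2 * σ2)) := by
        rw [← Real.exp_add, ht]
        congr 1
        field_simp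
        ring
end
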